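/- Under the assumptions of the constant-stepsize gradient projection method (grad f Lipschitz with constant L on C, 0 < α < 1/L, p_{k+1} = P_C(exp_{p_k}(−α grad f(p_k))), f bounded below by f* on C), for every N ∈ ℕ: min{ d(p_k, p_{k+1}) : k = 0,…,N } ≤ √(f(p₀) − f*) / √(Γ(N+1)), where Γ := (1−αL)/(2α). -/

import Mathlib

noncomputable section

/-- Lorentzian inner product on ℝ^{n+1}. -/
def lip {n : ℕ} (x y : Fin (n+1) → ℝ) : ℝ :=
  (∑ i : Fin n, x i.castSucc * y i.castSucc) - x (Fin.last n) * y (Fin.last n)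

/-- Lorentzian norm (of vectors with nonnegative self-product). -/
def lnorm {n : ℕ} (x : Fin (n+1) → ℝ) : ℝ := Real.sqrt (lip x x)

/-- Euclidean dot product. -/
def edot {n : ℕ} (x y : Fin (n+1) → ℝ) : ℝ := ∑ i, x i * y i

/-- The matrix J = diag(1,…,1,−1) as a map. -/
def Jm {n : ℕ} (x : Fin (n+1) → ℝ) : Fin (n+1) → ℝ :=
  fun i => if i = Fin.last n then -(x i) else x i

/-- The κ-hyperbolic space form (hyperboloid model). -/
def Hyp {n : ℕ} (κ : ℝ) : Set (Fin (n+1) → ℝ) :=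
  {p | lip p p = -1/κ ∧ 0 < p (Fin.last n)}

/-- Inverse hyperbolic cosine. -/
def arcosh (x : ℝ) : ℝ := Real.log (x + Real.sqrt (x^2 - 1))

/-- Intrinsic distance on the κ-hyperbolic space form. -/
def dH {n : ℕ} (κ : ℝ) (p q : Fin (n+1) → ℝ) : ℝ :=
  (1 / Real.sqrt κ) * arcosh (-(κ * lip p q))

/-- Lorentzian projection onto the tangent space at p. -/
def projT {n : ℕ} (κ : ℝ) (p x : Fin (n+1) → ℝ) : Fin (n+1) → ℝ :=
  x + (κ * lip p x) • p

/-- Logarithm map of the κ-hyperbolic space form. -/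
def logH {n : ℕ} (κ : ℝ) (p q : Fin (n+1) → ℝ) : Fin (n+1) → ℝ :=
  (dH κ p q / lnorm (projT κ p q)) • projT κ p q

/-- Exponential map of the κ-hyperbolic space form. -/
def expH {n : ℕ} (κ : ℝ) (p v : Fin (n+1) → ℝ) : Fin (n+1) → ℝ :=
  Real.cosh (Real.sqrt κ * lnorm v) • p +
    (Real.sinh (Real.sqrt κ * lnorm v) / (Real.sqrt κ * lnorm v)) • v

/-- The cone spanned by a set. -/
def coneOf {n : ℕ} (C : Set (Fin (n+1) → ℝ)) : Set (Fin (n+1) → ℝ) :=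
  {x | ∃ t : ℝ, 0 ≤ t ∧ ∃ p ∈ C, x = t • p}

/-- The Lorentz cone. -/
def LorentzCone {n : ℕ} : Set (Fin (n+1) → ℝ) :=
  {x | lip x x ≤ 0 ∧ 0 ≤ x (Fin.last n)}

/-- The interior of the Lorentz cone. -/
def LorentzConeInt {n : ℕ} : Set (Fin (n+1) → ℝ) :=
  {x | lip x x < 0 ∧ 0 < x (Fin.last n)}

/-- Euclidean gradient of f at p. -/
def euclGrad {n : ℕ} (f : (Fin (n+1) → ℝ) → ℝ) (p : Fin (n+1) → ℝ) : Fin (n+1) → ℝ :=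
  fun i => fderiv ℝ f p (Pi.single i 1)

/-- Riemannian gradient on the κ-hyperbolic space form. -/
def gradH {n : ℕ} (κ : ℝ) (f : (Fin (n+1) → ℝ) → ℝ) (p : Fin (n+1) → ℝ) : Fin (n+1) → ℝ :=
  projT κ p (Jm (euclGrad f p))

/-- Parallel transport from T_p to T_q along the geodesic. -/
def ptrans {n : ℕ} (κ : ℝ) (p q v : Fin (n+1) → ℝ) : Fin (n+1) → ℝ :=
  v - ((κ / (κ * lip p q - 1)) * lip q v) • (p + q)

/-! If `q` is no farther than `p` from `exp_p w`, then the hyperbolic law of cosines and the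
monotonicity of `tanh x / x` give `d(p, q)² / 2 ≤ ⟨w, log_p q⟩`. For `w = -α grad f(p)` this is the
first-order decrease of `f`; the second-order error along the geodesic from `p` to `q` is at most
`L d(p, q)² / 2`, because parallel transport preserves the component along the velocity. Hence `f`
decreases by at least `Γ d(p, q)²`, and telescoping gives the rate. -/

lemma exists_le_sqrt_div_of_sufficient_decrease {F d : ℕ → ℝ} {c m : ℝ} (hc : 0 < c)
    (hdecrease : ∀ k, F (k + 1) ≤ F k - c * d k ^ 2) (hm : ∀ k, m ≤ F k) (N : ℕ) :
    ∃ k ≤ N, d k ≤ √(F 0 - m) / √(c * (N + 1)) := by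
  have hsum : ∑ k ∈ Finset.range (N + 1), c * d k ^ 2 ≤
      ∑ _k ∈ Finset.range (N + 1), (F 0 - m) / (N + 1) := by
    calc ∑ k ∈ Finset.range (N + 1), c * d k ^ 2
        ≤ ∑ k ∈ Finset.range (N + 1), (F k - F (k + 1)) :=
          Finset.sum_le_sum fun k _ => by linarith [hdecrease k]
      _ = F 0 - F (N + 1) := Finset.sum_range_sub' F (N + 1)
      _ ≤ F 0 - m := by linarith [hm (N + 1)]
      _ = ∑ _k ∈ Finset.range (N + 1), (F 0 - m) / (N + 1) := by
          rw [Finset.sum_const, Finset.card_range, nsmul_eq_mul, Nat.cast_add_one]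
          field_simp
  obtain ⟨k, hk, hle⟩ := Finset.exists_le_of_sum_le Finset.nonempty_range_add_one hsum
  refine ⟨k, Finset.mem_range_succ_iff.mp hk, ?_⟩
  rw [← Real.sqrt_div' _ (by positivity)]
  apply Real.le_sqrt_of_sq_le
  rw [le_div_iff₀ (by positivity)] at hle ⊢
  linarith

lemma le_add_mul_add_sq_of_deriv_le {g g' : ℝ → ℝ} {a c M : ℝ} (ha : 0 ≤ a)
    (hg : ∀ s ∈ Set.Icc 0 a, HasDerivAt g (g' s) s) (hg' : ∀ s ∈ Set.Ico 0 a, g' s ≤ c + M * s) :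
    g a ≤ g 0 + c * a + M / 2 * a ^ 2 := by
  have hmodel : ∀ s, HasDerivAt (fun t => g 0 + c * t + M / 2 * t ^ 2) (c + M * s) s := fun s => by
    convert! (((hasDerivAt_id s).const_mul c).const_add (g 0)).add
      ((hasDerivAt_pow 2 s).const_mul (M / 2)) using 1
    push_cast
    ring
  exact image_le_of_deriv_right_le_deriv_boundary
    (fun s hs => (hg s hs).continuousAt.continuousWithinAt)
    (fun s hs => (hg s (Set.Ico_subset_Icc_self hs)).hasDerivWithinAt)
    (by simp)
    (fun s _ => (hmodel s).continuousAt.continuousWithinAt)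
    (fun s _ => (hmodel s).hasDerivWithinAt) hg' (Set.right_mem_Icc.mpr ha)

lemma convexOn_sinh : ConvexOn ℝ (Set.Ici 0) Real.sinh := by
  refine convexOn_of_deriv2_nonneg (convex_Ici 0) Real.continuous_sinh.continuousOn
    Real.differentiable_sinh.differentiableOn ?_ fun x hx => ?_
  · simpa only [Real.deriv_sinh] using Real.differentiable_cosh.differentiableOn
  · rw [interior_Ici, Set.mem_Ioi] at hx
    simpa using hx.le

lemma mul_sinh_le_mul_sinh {s t : ℝ} (hs : 0 ≤ s) (hst : s ≤ t) :
    t * Real.sinh s ≤ s * Real.sinh t := by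
  rcases hs.eq_or_lt with rfl | hs
  · simp
  have ht := hs.trans_le hst
  have h := convexOn_sinh.secant_mono Set.self_mem_Ici hs.le ht.le hs.ne' ht.ne' hst
  rw [Real.sinh_zero, sub_zero, sub_zero, sub_zero, sub_zero, div_le_div_iff₀ hs ht] at h
  linarith

/-- `tanh x / x` is antitone. -/
lemma mul_sinh_mul_cosh_le {x y : ℝ} (hx : 0 ≤ x) (hxy : x ≤ y) :
    x * (Real.sinh y * Real.cosh x) ≤ y * (Real.sinh x * Real.cosh y) := by
  have h := mul_sinh_le_mul_sinh (sub_nonneg.mpr hxy) (by linarith : y - x ≤ y + x)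
  rw [Real.sinh_sub, Real.sinh_add] at h
  linarith

lemma le_mul_of_tanh_le {A b e : ℝ} (hA : 0 < A) (hb : 0 ≤ b) (he : e ≤ 1)
    (h : Real.sinh A * Real.cosh b ≤ Real.sinh b * Real.cosh A * e) : A ≤ b * e := by
  have hprod : 0 ≤ Real.sinh b * Real.cosh A :=
    mul_nonneg (Real.sinh_nonneg_iff.mpr hb) (Real.cosh_pos A).le
  have hAb : A ≤ b := by
    have hsinh : 0 ≤ Real.sinh (b - A) := by
      rw [Real.sinh_sub]
      linarith [mul_le_of_le_one_right hprod he]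
    linarith [Real.sinh_nonneg_iff.mp hsinh]
  have hpos : 0 < Real.sinh b * Real.cosh A :=
    mul_pos (Real.sinh_pos_iff.mpr (hA.trans_le hAb)) (Real.cosh_pos A)
  refine le_of_mul_le_mul_right ?_ hpos
  calc A * (Real.sinh b * Real.cosh A)
      ≤ b * (Real.sinh A * Real.cosh b) := mul_sinh_mul_cosh_le hA.le hAb
    _ ≤ b * (Real.sinh b * Real.cosh A * e) := mul_le_mul_of_nonneg_left h hb
    _ = b * e * (Real.sinh b * Real.cosh A) := by ring

/-- In a hyperbolic triangle with sides `a`, `b` enclosing an angle of cosine `e`, the hypothesis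
says that the third side is at most `b`. -/
lemma half_le_mul_of_law_of_cosines {a b e : ℝ} (ha : 0 < a) (hb : 0 ≤ b) (he : e ≤ 1)
    (h : Real.cosh b * Real.cosh a - Real.sinh b * Real.sinh a * e ≤ Real.cosh b) :
    a / 2 ≤ b * e := by
  obtain ⟨A, rfl⟩ : ∃ A, a = 2 * A := ⟨a / 2, by ring⟩
  have hA : 0 < A := by linarith
  rw [Real.cosh_two_mul, Real.sinh_two_mul, Real.cosh_sq A] at h
  rw [mul_div_cancel_left₀ A two_ne_zero]
  refine le_mul_of_tanh_le hA hb he (le_of_mul_le_mul_left ?_ (Real.sinh_pos_iff.mpr hA))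
  linarith

section LorentzForm

variable {n : ℕ}

lemma lip_comm (x y : Fin (n + 1) → ℝ) : lip x y = lip y x := by
  simp only [lip, mul_comm]

lemma lip_add_left (x y z : Fin (n + 1) → ℝ) : lip (x + y) z = lip x z + lip y z := by
  simp only [lip, Pi.add_apply, add_mul, Finset.sum_add_distrib]
  ring

lemma lip_smul_left (c : ℝ) (x y : Fin (n + 1) → ℝ) : lip (c • x) y = c * lip x y := by
  simp only [lip, Pi.smul_apply, smul_eq_mul, mul_assoc, mul_sub, Finset.mul_sum]

lemma lip_add_right (x y z : Fin (n + 1) → ℝ) : lip x (y + z) = lip x y + lip x z := by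
  simp only [lip_comm x, lip_add_left]

lemma lip_smul_right (c : ℝ) (x y : Fin (n + 1) → ℝ) : lip x (c • y) = c * lip x y := by
  simp only [lip_comm x, lip_smul_left]

/-- The Lorentzian inner product `lip` as a bilinear form, which gives access to the Cauchy–Schwarz
inequality on its positive semidefinite subspaces. -/
def lorentzForm : LinearMap.BilinForm ℝ (Fin (n + 1) → ℝ) :=
  LinearMap.mk₂ ℝ lip lip_add_left lip_smul_left lip_add_right lip_smul_right

lemma lip_neg_left (x y : Fin (n + 1) → ℝ) : lip (-x) y = -lip x y :=
  LinearMap.BilinForm.neg_left (B₁ := lorentzForm) x y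

lemma lip_neg_right (x y : Fin (n + 1) → ℝ) : lip x (-y) = -lip x y :=
  LinearMap.BilinForm.neg_right (B₁ := lorentzForm) x y

lemma lip_sub_left (x y z : Fin (n + 1) → ℝ) : lip (x - y) z = lip x z - lip y z :=
  LinearMap.BilinForm.sub_left (B₁ := lorentzForm) x y z

lemma lip_sub_right (x y z : Fin (n + 1) → ℝ) : lip x (y - z) = lip x y - lip x z :=
  LinearMap.BilinForm.sub_right (B₁ := lorentzForm) x y z

lemma lip_zero_right (x : Fin (n + 1) → ℝ) : lip x 0 = 0 :=
  LinearMap.BilinForm.zero_right (B := lorentzForm) x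

lemma lip_self_of_last_eq_zero {x : Fin (n + 1) → ℝ} (hx : x (Fin.last n) = 0) :
    lip x x = ∑ i : Fin n, x i.castSucc ^ 2 := by
  simp only [lip, hx, mul_zero, sub_zero, sq]

lemma two_mul_last_mul_lip_le (x y : Fin (n + 1) → ℝ) :
    2 * (x (Fin.last n) * y (Fin.last n)) * lip x y ≤
      y (Fin.last n) ^ 2 * lip x x + x (Fin.last n) ^ 2 * lip y y := by
  -- The combination of `x` and `y` with last coordinate zero is spacelike.
  have h : 0 ≤ lip (y (Fin.last n) • x - x (Fin.last n) • y)
      (y (Fin.last n) • x - x (Fin.last n) • y) := by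
    rw [lip_self_of_last_eq_zero]
    · positivity
    · simp only [Pi.sub_apply, Pi.smul_apply, smul_eq_mul]
      ring
  simp only [lip_sub_left, lip_sub_right, lip_smul_left, lip_smul_right, lip_comm y x] at h
  linarith

lemma lip_lt_zero_of_mem_LorentzConeInt {x y : Fin (n + 1) → ℝ} (hx : x ∈ LorentzConeInt)
    (hy : y ∈ LorentzConeInt) : lip x y < 0 := by
  obtain ⟨hxx, hx0⟩ := hx
  obtain ⟨hyy, hy0⟩ := hy
  refine neg_of_mul_neg_right ((two_mul_last_mul_lip_le x y).trans_lt ?_) (by positivity)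
  exact add_neg (mul_neg_of_pos_of_neg (by positivity) hxx)
    (mul_neg_of_pos_of_neg (by positivity) hyy)

lemma lip_self_pos_of_orthogonal {m x : Fin (n + 1) → ℝ} (hm : lip m m < 0) (hmx : lip m x = 0)
    (hx : x ≠ 0) : 0 < lip x x := by
  contrapose! hx
  have hcomb := two_mul_last_mul_lip_le m x
  rw [hmx, mul_zero] at hcomb
  have hlast : x (Fin.last n) = 0 := by
    by_contra hne
    have hneg : x (Fin.last n) ^ 2 * lip m m < 0 := mul_neg_of_pos_of_neg (by positivity) hm
    linarith [mul_nonpos_of_nonneg_of_nonpos (sq_nonneg (m (Fin.last n))) hx]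
  rw [lip_self_of_last_eq_zero hlast] at hx
  have hzero := (Finset.sum_eq_zero_iff_of_nonneg fun i _ => sq_nonneg (x (Fin.castSucc i))).mp
    (hx.antisymm (Finset.sum_nonneg fun i _ => sq_nonneg _))
  funext i
  refine Fin.lastCases hlast (fun j => ?_) i
  exact sq_eq_zero_iff.mp (hzero j (Finset.mem_univ j))

lemma lip_self_nonneg_of_orthogonal {m x : Fin (n + 1) → ℝ} (hm : lip m m < 0)
    (hmx : lip m x = 0) : 0 ≤ lip x x := by
  rcases eq_or_ne x 0 with rfl | hx
  · exact (lip_zero_right 0).ge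
  · exact (lip_self_pos_of_orthogonal hm hmx hx).le

lemma lip_le_lnorm_mul_lnorm {m x y : Fin (n + 1) → ℝ} (hm : lip m m < 0) (hmx : lip m x = 0)
    (hmy : lip m y = 0) : lip x y ≤ lnorm x * lnorm y := by
  let B := lorentzForm.restrict (LinearMap.ker (lorentzForm m))
  have hB : ∀ v, 0 ≤ B v v := fun v => lip_self_nonneg_of_orthogonal hm v.2
  have hcs : lip x y ^ 2 ≤ lip x x * lip y y :=
    B.apply_sq_le_of_symm hB ⟨fun v w => lip_comm v.1 w.1⟩ ⟨x, hmx⟩ ⟨y, hmy⟩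
  rw [lnorm, lnorm, ← Real.sqrt_mul (lip_self_nonneg_of_orthogonal hm hmx)]
  exact Real.le_sqrt_of_sq_le hcs

lemma lnorm_smul {c : ℝ} (hc : 0 ≤ c) (x : Fin (n + 1) → ℝ) : lnorm (c • x) = c * lnorm x := by
  rw [lnorm, lip_smul_left, lip_smul_right, ← mul_assoc, Real.sqrt_mul (mul_self_nonneg c),
    Real.sqrt_mul_self hc, lnorm]

lemma lnorm_neg (x : Fin (n + 1) → ℝ) : lnorm (-x) = lnorm x := by
  rw [lnorm, lip_neg_left, lip_neg_right, neg_neg, lnorm]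

end LorentzForm

section Hyperboloid

variable {n : ℕ} {κ : ℝ} {p q x : Fin (n + 1) → ℝ}

lemma Hyp_subset_LorentzConeInt (hκ : 0 < κ) : (Hyp κ : Set (Fin (n + 1) → ℝ)) ⊆ LorentzConeInt :=
  fun _ hp => ⟨hp.1.trans_lt (div_neg_of_neg_of_pos neg_one_lt_zero hκ), hp.2⟩

lemma lip_projT (hκ : κ ≠ 0) (hp : lip p p = -1 / κ) (x : Fin (n + 1) → ℝ) :
    lip p (projT κ p x) = 0 := by
  rw [projT, lip_add_right, lip_smul_right, hp]
  field_simp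
  ring

lemma lip_projT_self (hκ : κ ≠ 0) (hp : lip p p = -1 / κ) (x : Fin (n + 1) → ℝ) :
    lip (projT κ p x) (projT κ p x) = lip x x + κ * lip p x ^ 2 := by
  nth_rewrite 1 [projT]
  rw [lip_add_left, lip_smul_left, lip_projT hκ hp, projT, lip_add_right, lip_smul_right,
    lip_comm x p]
  ring

lemma one_lt_neg_mul_lip (hκ : 0 < κ) (hp : p ∈ Hyp κ) (hq : q ∈ Hyp κ) (hpq : p ≠ q) :
    1 < -(κ * lip p q) := by
  have hpm := Hyp_subset_LorentzConeInt hκ hp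
  have hneg := lip_lt_zero_of_mem_LorentzConeInt hpm (Hyp_subset_LorentzConeInt hκ hq)
  have hpos : 0 < -(κ * lip p q) := neg_pos.mpr (mul_neg_of_pos_of_neg hκ hneg)
  have hsq : κ * lip (projT κ p q) (projT κ p q) = (-(κ * lip p q)) ^ 2 - 1 := by
    rw [lip_projT_self hκ.ne' hp.1, hq.1]
    field_simp
    ring
  have hne : projT κ p q ≠ 0 := by
    intro h
    have hone : -(κ * lip p q) = 1 := by
      rw [h, lip_zero_right, mul_zero] at hsq
      exact (pow_eq_one_iff_of_nonneg hpos.le two_ne_zero).mp (sub_eq_zero.mp hsq.symm)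
    rw [projT, neg_eq_iff_eq_neg.mp hone, neg_one_smul, ← sub_eq_add_neg, sub_eq_zero] at h
    exact hpq h.symm
  have hprojT := mul_pos hκ (lip_self_pos_of_orthogonal hpm.1 (lip_projT hκ.ne' hp.1 q) hne)
  rw [hsq, sub_pos] at hprojT
  exact (one_lt_sq_iff₀ hpos.le).mp hprojT

lemma smul_add_smul_mem_coneOf {C : Set (Fin (n + 1) → ℝ)} (hconv : Convex ℝ (coneOf C))
    (hp : p ∈ C) (hq : q ∈ C) {s t : ℝ} (hs : 0 ≤ s) (ht : 0 ≤ t) :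
    s • p + t • q ∈ coneOf C := by
  have h := hconv ⟨2 * s, by positivity, p, hp, rfl⟩ ⟨2 * t, by positivity, q, hq, rfl⟩
    one_half_pos.le one_half_pos.le (add_halves 1)
  simpa only [smul_smul, ← mul_assoc, one_div, inv_mul_cancel₀ (two_ne_zero' ℝ), one_mul] using h

lemma mem_of_mem_coneOf (hκ : κ ≠ 0) {C : Set (Fin (n + 1) → ℝ)} (hC : C ⊆ Hyp κ)
    (hx : x ∈ coneOf C) (hxx : lip x x = -1 / κ) : x ∈ C := by
  obtain ⟨t, ht, m, hm, rfl⟩ := hx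
  rw [lip_smul_left, lip_smul_right, (hC hm).1] at hxx
  have ht1 : t * t = 1 := by
    field_simp at hxx
    linarith
  rwa [(mul_self_eq_one_iff.mp ht1).resolve_right (by linarith), one_smul]

lemma lip_ptrans (hκ : κ ≠ 0) (hq : lip q q = -1 / κ) (hpq : κ * lip p q ≠ 1)
    (v : Fin (n + 1) → ℝ) : lip q (ptrans κ p q v) = 0 := by
  have hden : κ * lip p q - 1 ≠ 0 := sub_ne_zero.mpr hpq
  rw [ptrans, lip_sub_right, lip_smul_right, lip_add_right, hq, lip_comm q p]
  field_simp
  ring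

end Hyperboloid

section Distance

variable {n : ℕ} {κ : ℝ} {p q z : Fin (n + 1) → ℝ}

lemma arcosh_eq_real_arcosh (x : ℝ) : arcosh x = Real.arcosh x := rfl

lemma dH_eq_div_sqrt {s : ℝ} (hs : 0 ≤ s) (h : -(κ * lip p q) = Real.cosh s) :
    dH κ p q = s / √κ := by
  rw [dH, h, arcosh_eq_real_arcosh, Real.arcosh_cosh hs, one_div_mul_eq_div]

lemma dH_self (hκ : κ ≠ 0) (hp : lip p p = -1 / κ) : dH κ p p = 0 := by
  rw [dH_eq_div_sqrt le_rfl, zero_div]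
  rw [hp, mul_div_cancel₀ _ hκ, neg_neg, Real.cosh_zero]

lemma logH_self (hκ : κ ≠ 0) (hp : lip p p = -1 / κ) : logH κ p p = 0 := by
  rw [logH, dH_self hκ hp, zero_div, zero_smul]

lemma neg_mul_lip_le_of_dH_le (hκ : 0 < κ) (hp : 0 < -(κ * lip z p))
    (h : dH κ z q ≤ dH κ z p) : -(κ * lip z q) ≤ -(κ * lip z p) := by
  rcases le_or_gt (-(κ * lip z q)) 0 with hq | hq
  · exact hq.trans hp.le
  · have hsqrt : 0 < 1 / √κ := by positivity
    exact (Real.arcosh_le_arcosh hq hp).mp (le_of_mul_le_mul_left h hsqrt)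

end Distance

section Geodesic

variable {n : ℕ} {κ : ℝ} {p q u w : Fin (n + 1) → ℝ}

/-- The geodesic through `p` with velocity `u`; its velocity at time `s` is `geodesic u p s`. -/
def geodesic (p u : Fin (n + 1) → ℝ) (s : ℝ) : Fin (n + 1) → ℝ :=
  Real.cosh s • p + Real.sinh s • u

/-- Initial data of a geodesic: a point `p` of the quadric carrying `Hyp κ` and a tangent vector `u`
at `p`. The norm of `u` is `1 / √κ` rather than `1`, so `√κ` stays out of the formulas and a
parameter interval of length `s` has length `s / √κ`. -/
structure IsGeodesicFrame (κ : ℝ) (p u : Fin (n + 1) → ℝ) : Prop where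
  lip_base : lip p p = -1 / κ
  lip_tangent : lip p u = 0
  lip_velocity : lip u u = 1 / κ

lemma geodesic_zero (p u : Fin (n + 1) → ℝ) : geodesic p u 0 = p := by
  rw [geodesic, Real.cosh_zero, Real.sinh_zero, one_smul, zero_smul, add_zero]

lemma hasDerivAt_geodesic (p u : Fin (n + 1) → ℝ) (s : ℝ) :
    HasDerivAt (geodesic p u) (geodesic u p s) s := by
  have h := ((Real.hasDerivAt_cosh s).smul_const p).add ((Real.hasDerivAt_sinh s).smul_const u)
  rwa [add_comm (Real.sinh s • p)] at h

lemma geodesic_eq_smul_add_smul (p u : Fin (n + 1) → ℝ) {a : ℝ} (ha : a ≠ 0) (s : ℝ) :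
    geodesic p u s = (Real.sinh (a - s) / Real.sinh a) • p +
      (Real.sinh s / Real.sinh a) • geodesic p u a := by
  have hsinh : Real.sinh a ≠ 0 := Real.sinh_ne_zero.mpr ha
  rw [geodesic, geodesic, smul_add, smul_smul, smul_smul, ← add_assoc, ← add_smul,
    div_mul_cancel₀ _ hsinh, Real.sinh_sub]
  congr 2
  field_simp
  ring

namespace IsGeodesicFrame

lemma lip_base_geodesic (h : IsGeodesicFrame κ p u) (s : ℝ) :
    lip p (geodesic p u s) = -Real.cosh s / κ := by
  rw [geodesic, lip_add_right, lip_smul_right, lip_smul_right, h.lip_base, h.lip_tangent]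
  ring

lemma lip_base_velocity (h : IsGeodesicFrame κ p u) (s : ℝ) :
    lip p (geodesic u p s) = -Real.sinh s / κ := by
  rw [geodesic, lip_add_right, lip_smul_right, lip_smul_right, h.lip_base, h.lip_tangent]
  ring

lemma lip_velocity_base (h : IsGeodesicFrame κ p u) : lip u p = 0 :=
  (lip_comm u p).trans h.lip_tangent

lemma flow (h : IsGeodesicFrame κ p u) (s : ℝ) :
    IsGeodesicFrame κ (geodesic p u s) (geodesic u p s) := by
  constructor <;>
    simp only [geodesic, lip_add_left, lip_add_right, lip_smul_left, lip_smul_right,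
      h.lip_base, h.lip_tangent, h.lip_velocity_base, h.lip_velocity]
  · linear_combination (-1 / κ) * Real.cosh_sq s
  · ring
  · linear_combination (1 / κ) * Real.cosh_sq s

lemma lnorm_velocity (h : IsGeodesicFrame κ p u) : lnorm u = 1 / √κ := by
  rw [lnorm, h.lip_velocity, Real.sqrt_div zero_le_one, Real.sqrt_one]

lemma mul_lip_base_geodesic (h : IsGeodesicFrame κ p u) (hκ : κ ≠ 0) (s : ℝ) :
    κ * lip p (geodesic p u s) = -Real.cosh s := by
  rw [h.lip_base_geodesic, mul_div_cancel₀ _ hκ]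

lemma dH_geodesic (h : IsGeodesicFrame κ p u) (hκ : κ ≠ 0) {s : ℝ} (hs : 0 ≤ s) :
    dH κ p (geodesic p u s) = s / √κ :=
  dH_eq_div_sqrt hs (by rw [h.mul_lip_base_geodesic hκ, neg_neg])

lemma logH_geodesic (h : IsGeodesicFrame κ p u) (hκ : 0 < κ) {s : ℝ} (hs : 0 < s) :
    logH κ p (geodesic p u s) = s • u := by
  have hproj : projT κ p (geodesic p u s) = Real.sinh s • u := by
    rw [projT, h.mul_lip_base_geodesic hκ.ne', geodesic, neg_smul]
    abel
  have hsinh : 0 < Real.sinh s := Real.sinh_pos_iff.mpr hs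
  rw [logH, hproj, lnorm_smul hsinh.le, h.lnorm_velocity, h.dH_geodesic hκ.ne' hs.le, smul_smul]
  congr 1
  field_simp

lemma geodesic_mem (h : IsGeodesicFrame κ p u) (hκ : κ ≠ 0) {C : Set (Fin (n + 1) → ℝ)}
    (hC : C ⊆ Hyp κ) (hconv : Convex ℝ (coneOf C)) {a s : ℝ} (hp : p ∈ C)
    (hq : geodesic p u a ∈ C) (hs : s ∈ Set.Ico 0 a) : geodesic p u s ∈ C := by
  have ha : 0 < a := hs.1.trans_lt hs.2
  have hsinh : 0 ≤ Real.sinh a := Real.sinh_nonneg_iff.mpr ha.le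
  refine mem_of_mem_coneOf hκ hC ?_ (h.flow s).lip_base
  rw [geodesic_eq_smul_add_smul p u ha.ne' s]
  exact smul_add_smul_mem_coneOf hconv hp hq
    (div_nonneg (Real.sinh_nonneg_iff.mpr (sub_nonneg.mpr hs.2.le)) hsinh)
    (div_nonneg (Real.sinh_nonneg_iff.mpr hs.1) hsinh)

/-- The hyperbolic law of cosines, at the vertex `p` between the sides to `exp_p w` and to
`geodesic p u a`. -/
lemma neg_mul_lip_expH_geodesic (h : IsGeodesicFrame κ p u) (hκ : κ ≠ 0) (hw : lip p w = 0)
    (a : ℝ) : -(κ * lip (expH κ p w) (geodesic p u a)) =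
      Real.cosh (√κ * lnorm w) * Real.cosh a -
        Real.sinh (√κ * lnorm w) * Real.sinh a * (κ * lip w u / (√κ * lnorm w)) := by
  simp only [expH, geodesic, lip_add_left, lip_add_right, lip_smul_left, lip_smul_right,
    h.lip_base, h.lip_tangent, (lip_comm w p).trans hw]
  linear_combination (-(Real.cosh (√κ * lnorm w) * Real.cosh a)) * mul_div_cancel₀ (-1) hκ

lemma lip_ptrans_velocity (h : IsGeodesicFrame κ p u) (hκ : κ ≠ 0) {v : Fin (n + 1) → ℝ}
    (hv : lip p v = 0) (s : ℝ) :
    lip (ptrans κ p (geodesic p u s) v) (geodesic u p s) = lip v u := by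
  have hden : -Real.cosh s - 1 ≠ 0 := by linarith [Real.cosh_pos s]
  have hqv : lip (geodesic p u s) v = Real.sinh s * lip v u := by
    rw [geodesic, lip_add_left, lip_smul_left, lip_smul_left, hv, lip_comm u v]
    ring
  have hvel : lip v (geodesic u p s) = Real.cosh s * lip v u := by
    rw [geodesic, lip_add_right, lip_smul_right, lip_smul_right, lip_comm v p, hv]
    ring
  rw [ptrans, lip_sub_left, lip_smul_left, lip_add_left, hvel, hqv, h.lip_base_velocity,
    (h.flow s).lip_tangent, h.mul_lip_base_geodesic hκ]
  field_simp
  linear_combination lip v u * Real.sinh_sq s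

end IsGeodesicFrame

lemma exists_isGeodesicFrame (hκ : 0 < κ) (hp : p ∈ Hyp κ) (hq : q ∈ Hyp κ) (hpq : p ≠ q) :
    ∃ u, ∃ a > 0, IsGeodesicFrame κ p u ∧ geodesic p u a = q := by
  have hone := one_lt_neg_mul_lip hκ hp hq hpq
  obtain ⟨a, ha, hcosh⟩ : ∃ a > 0, Real.cosh a = -(κ * lip p q) :=
    ⟨_, Real.arcosh_pos hone, Real.cosh_arcosh hone.le⟩
  have hsinh : Real.sinh a ≠ 0 := Real.sinh_ne_zero.mpr ha.ne'
  refine ⟨(Real.sinh a)⁻¹ • projT κ p q, a, ha, ⟨hp.1, ?_, ?_⟩, ?_⟩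
  · rw [lip_smul_right, lip_projT hκ.ne' hp.1, mul_zero]
  · have hlip : lip p q = -Real.cosh a / κ := by
      rw [hcosh]
      field_simp
    rw [lip_smul_left, lip_smul_right, lip_projT_self hκ.ne' hp.1, hq.1, hlip]
    field_simp
    linear_combination Real.cosh_sq a
  · rw [geodesic, smul_inv_smul₀ hsinh, projT, hcosh, neg_smul]
    abel

end Geodesic

section Gradient

variable {n : ℕ} {κ : ℝ} {p q u w : Fin (n + 1) → ℝ} {f : (Fin (n + 1) → ℝ) → ℝ}

lemma lip_Jm (g v : Fin (n + 1) → ℝ) : lip (Jm g) v = ∑ i, g i * v i := by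
  rw [Fin.sum_univ_castSucc]
  simp [lip, Jm, Fin.castSucc_ne_last]

lemma lip_Jm_euclGrad (f : (Fin (n + 1) → ℝ) → ℝ) (x v : Fin (n + 1) → ℝ) :
    lip (Jm (euclGrad f x)) v = fderiv ℝ f x v := by
  have hsingle : ∀ i, Pi.single i (v i) = v i • (Pi.single i 1 : Fin (n + 1) → ℝ) := fun i => by
    rw [← Pi.single_smul, smul_eq_mul, mul_one]
  rw [lip_Jm]
  conv_rhs => rw [← Finset.univ_sum_single v, map_sum]
  simp only [euclGrad, hsingle, map_smul, smul_eq_mul, mul_comm]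

lemma lip_gradH_eq_fderiv (hw : lip p w = 0) : lip (gradH κ f p) w = fderiv ℝ f p w := by
  rw [gradH, projT, lip_add_left, lip_smul_left, hw, mul_zero, add_zero, lip_Jm_euclGrad]

lemma lip_base_gradH (hκ : κ ≠ 0) (hp : lip p p = -1 / κ) : lip p (gradH κ f p) = 0 :=
  lip_projT hκ hp _

lemma IsGeodesicFrame.fderiv_velocity_le (h : IsGeodesicFrame κ p u) (hκ : 0 < κ) {L s : ℝ}
    (hs : 0 ≤ s)
    (hLip : lnorm (ptrans κ p (geodesic p u s) (gradH κ f p) - gradH κ f (geodesic p u s)) ≤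
      L * dH κ p (geodesic p u s)) :
    fderiv ℝ f (geodesic p u s) (geodesic u p s) ≤ lip (gradH κ f p) u + L / κ * s := by
  have hframe := h.flow s
  set γ := geodesic p u s with hγ
  set γ' := geodesic u p s
  have hγneg : lip γ γ < 0 := hframe.lip_base.trans_lt (div_neg_of_neg_of_pos neg_one_lt_zero hκ)
  have hpγ : κ * lip p γ ≠ 1 := by
    rw [h.mul_lip_base_geodesic hκ.ne']
    linarith [Real.cosh_pos s]
  have hdiff : lip γ (ptrans κ p γ (gradH κ f p) - gradH κ f γ) = 0 := by
    rw [lip_sub_right, lip_ptrans hκ.ne' hframe.lip_base hpγ,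
      lip_base_gradH hκ.ne' hframe.lip_base, sub_zero]
  have hcs := lip_le_lnorm_mul_lnorm (y := -γ') hγneg hdiff
    (by rw [lip_neg_right, hframe.lip_tangent, neg_zero])
  rw [lip_neg_right, lip_sub_left, h.lip_ptrans_velocity hκ.ne' (lip_base_gradH hκ.ne' h.lip_base),
    lip_gradH_eq_fderiv hframe.lip_tangent, lnorm_neg, hframe.lnorm_velocity] at hcs
  have hbound := calc
    lnorm (ptrans κ p γ (gradH κ f p) - gradH κ f γ) * (1 / √κ)
        ≤ L * dH κ p γ * (1 / √κ) := by gcongr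
      _ = L * s / √κ ^ 2 := by
        rw [hγ, h.dH_geodesic hκ.ne' hs]
        ring
      _ = L / κ * s := by
        rw [Real.sq_sqrt hκ.le]
        ring
  linarith

lemma le_add_lip_gradH_logH_add_sq_dH (hκ : 0 < κ) {C : Set (Fin (n + 1) → ℝ)} (hC : C ⊆ Hyp κ)
    (hconv : Convex ℝ (coneOf C)) (hf : ∀ x ∈ C, DifferentiableAt ℝ f x) {L : ℝ} (hp : p ∈ C)
    (hLip : ∀ x ∈ C, lnorm (ptrans κ p x (gradH κ f p) - gradH κ f x) ≤ L * dH κ p x)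
    (hq : q ∈ C) :
    f q ≤ f p + lip (gradH κ f p) (logH κ p q) + L / 2 * dH κ p q ^ 2 := by
  rcases eq_or_ne p q with rfl | hpq
  · rw [logH_self hκ.ne' (hC hp).1, dH_self hκ.ne' (hC hp).1, lip_zero_right]
    simp
  obtain ⟨u, a, ha, h, rfl⟩ := exists_isGeodesicFrame hκ (hC hp) (hC hq) hpq
  have hmem : ∀ s ∈ Set.Icc 0 a, geodesic p u s ∈ C := fun s hs =>
    hs.2.eq_or_lt.elim (fun he => he ▸ hq)
      fun hlt => h.geodesic_mem hκ.ne' hC hconv hp hq ⟨hs.1, hlt⟩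
  have hderiv : ∀ s ∈ Set.Icc 0 a, HasDerivAt (fun t => f (geodesic p u t))
      (fderiv ℝ f (geodesic p u s) (geodesic u p s)) s := fun s hs =>
    (hf _ (hmem s hs)).hasFDerivAt.comp_hasDerivAt s (hasDerivAt_geodesic p u s)
  have hle := le_add_mul_add_sq_of_deriv_le ha.le hderiv fun s hs =>
    h.fderiv_velocity_le hκ hs.1 (hLip _ (hmem s (Set.Ico_subset_Icc_self hs)))
  rw [geodesic_zero] at hle
  rw [h.logH_geodesic hκ ha, h.dH_geodesic hκ.ne' ha.le, lip_smul_right, div_pow,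
    Real.sq_sqrt hκ.le]
  linear_combination hle

end Gradient

section GradientProjection

variable {n : ℕ} {κ : ℝ} {p q w : Fin (n + 1) → ℝ} {f : (Fin (n + 1) → ℝ) → ℝ}

lemma half_sq_dH_le_lip_logH (hκ : 0 < κ) (hp : p ∈ Hyp κ) (hq : q ∈ Hyp κ) (hw : lip p w = 0)
    (hcloser : dH κ (expH κ p w) q ≤ dH κ (expH κ p w) p) :
    dH κ p q ^ 2 / 2 ≤ lip w (logH κ p q) := by
  rcases eq_or_ne p q with rfl | hpq
  · rw [logH_self hκ.ne' hp.1, dH_self hκ.ne' hp.1, lip_zero_right]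
    simp
  obtain ⟨u, a, ha, h, rfl⟩ := exists_isGeodesicFrame hκ hp hq hpq
  have hzp : -(κ * lip (expH κ p w) p) = Real.cosh (√κ * lnorm w) := by
    simpa [geodesic_zero] using h.neg_mul_lip_expH_geodesic hκ.ne' hw 0
  have hside := neg_mul_lip_le_of_dH_le hκ (hzp ▸ Real.cosh_pos _) hcloser
  rw [hzp, h.neg_mul_lip_expH_geodesic hκ.ne' hw] at hside
  have hb : 0 ≤ √κ * lnorm w := mul_nonneg (Real.sqrt_nonneg _) (Real.sqrt_nonneg _)
  have hcos : κ * lip w u / (√κ * lnorm w) ≤ 1 := by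
    refine div_le_one_of_le₀ ?_ hb
    calc κ * lip w u ≤ κ * (lnorm w * (1 / √κ)) := by
          rw [← h.lnorm_velocity]
          gcongr
          exact lip_le_lnorm_mul_lnorm (Hyp_subset_LorentzConeInt hκ hp).1 hw h.lip_tangent
      _ = κ / √κ * lnorm w := by ring
      _ = √κ * lnorm w := by rw [Real.div_sqrt]
  have hhalf := half_le_mul_of_law_of_cosines ha hb hcos hside
  have hb0 : √κ * lnorm w ≠ 0 := fun h0 => by
    rw [h0, zero_mul] at hhalf
    linarith
  rw [mul_div_cancel₀ _ hb0] at hhalf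
  rw [h.logH_geodesic hκ ha, h.dH_geodesic hκ.ne' ha.le, lip_smul_right, div_pow,
    Real.sq_sqrt hκ.le]
  calc a ^ 2 / κ / 2 = a * (a / 2) / κ := by ring
    _ ≤ a * (κ * lip w u) / κ := by gcongr
    _ = a * lip w u := by field_simp

lemma gradient_projection_sufficient_decrease (hκ : 0 < κ) {C : Set (Fin (n + 1) → ℝ)}
    (hC : C ⊆ Hyp κ) (hconv : Convex ℝ (coneOf C)) (hf : ∀ x ∈ C, DifferentiableAt ℝ f x)
    {L α : ℝ} (hp : p ∈ C)
    (hLip : ∀ x ∈ C, lnorm (ptrans κ p x (gradH κ f p) - gradH κ f x) ≤ L * dH κ p x)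
    (hα : 0 < α) (hq : q ∈ C)
    (hcloser : dH κ (expH κ p (-(α • gradH κ f p))) q ≤
      dH κ (expH κ p (-(α • gradH κ f p))) p) :
    f q ≤ f p - (1 - α * L) / (2 * α) * dH κ p q ^ 2 := by
  have htangent : lip p (-(α • gradH κ f p)) = 0 := by
    rw [lip_neg_right, lip_smul_right, lip_base_gradH hκ.ne' (hC hp).1, mul_zero, neg_zero]
  have hfirst := half_sq_dH_le_lip_logH hκ (hC hp) (hC hq) htangent hcloser
  rw [lip_neg_left, lip_smul_left] at hfirst
  have hgrad : lip (gradH κ f p) (logH κ p q) ≤ -(dH κ p q ^ 2 / 2) / α := by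
    rw [le_div_iff₀ hα]
    linarith
  calc f q ≤ f p + lip (gradH κ f p) (logH κ p q) + L / 2 * dH κ p q ^ 2 :=
        le_add_lip_gradH_logH_add_sq_dH hκ hC hconv hf hp hLip hq
    _ ≤ f p + -(dH κ p q ^ 2 / 2) / α + L / 2 * dH κ p q ^ 2 := by gcongr
    _ = f p - (1 - α * L) / (2 * α) * dH κ p q ^ 2 := by
        field_simp
        ring

theorem gradient_projection_iteration_complexity_general (hκ : 0 < κ)
    {C : Set (Fin (n + 1) → ℝ)} (hC : C ⊆ Hyp κ) (hconv : Convex ℝ (coneOf C))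
    (hf : ∀ x ∈ C, DifferentiableAt ℝ f x) {L : ℝ}
    (hLip : ∀ a ∈ C, ∀ b ∈ C,
      lnorm (ptrans κ a b (gradH κ f a) - gradH κ f b) ≤ L * dH κ a b)
    {α : ℝ} (hα : 0 < α) (hαL : α * L < 1) {p : ℕ → Fin (n + 1) → ℝ} (hp : ∀ k, p k ∈ C)
    {fstar : ℝ} (hfstar : ∀ k, fstar ≤ f (p k))
    (hcloser : ∀ k, dH κ (expH κ (p k) (-(α • gradH κ f (p k)))) (p (k + 1)) ≤
      dH κ (expH κ (p k) (-(α • gradH κ f (p k)))) (p k)) (N : ℕ) :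
    ∃ k ≤ N, dH κ (p k) (p (k + 1)) ≤
      √(f (p 0) - fstar) / √((1 - α * L) / (2 * α) * (N + 1)) :=
  exists_le_sqrt_div_of_sufficient_decrease (F := fun k => f (p k))
    (div_pos (sub_pos.mpr hαL) (by positivity))
    (fun k => gradient_projection_sufficient_decrease hκ hC hconv hf (hp k) (hLip _ (hp k)) hα
      (hp (k + 1)) (hcloser k))
    hfstar N

end GradientProjection

/-- Iteration-complexity bound for the gradient projection method with constant
step size: with Γ = (1−αL)/(2α) and f bounded below by f* on C, for every N
min{d(p_k,p_{k+1}) : k ≤ N} ≤ √(f(p₀) − f*)/√(Γ(N+1)). -/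
theorem gradient_projection_iteration_complexity {n : ℕ} (κ : ℝ) (hκ : 0 < κ)
    (C : Set (Fin (n+1) → ℝ)) (hC : C ⊆ Hyp κ) (hCc : IsClosed C)
    (hconv : Convex ℝ (coneOf C))
    (f : (Fin (n+1) → ℝ) → ℝ) (hf : Differentiable ℝ f)
    (L : ℝ) (hL : 0 ≤ L)
    (hLip : ∀ a ∈ C, ∀ b ∈ C,
      lnorm (ptrans κ a b (gradH κ f a) - gradH κ f b) ≤ L * dH κ a b)
    (α : ℝ) (hα1 : 0 < α) (hα2 : α < 1 / L)
    (fstar : ℝ) (hfstar : ∀ q ∈ C, fstar ≤ f q)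
    (p : ℕ → Fin (n+1) → ℝ) (hp0 : p 0 ∈ C)
    (hrec : ∀ k : ℕ, p (k+1) ∈ C ∧
      (∀ y ∈ C, dH κ (expH κ (p k) (-(α • gradH κ f (p k)))) (p (k+1)) ≤
        dH κ (expH κ (p k) (-(α • gradH κ f (p k)))) y) ∧
      (∀ y ∈ C, lip (logH κ (p (k+1)) (expH κ (p k) (-(α • gradH κ f (p k)))))
        (logH κ (p (k+1)) y) ≤ 0)) :
    ∀ N : ℕ, ∃ k ≤ N, dH κ (p k) (p (k+1)) ≤
      Real.sqrt (f (p 0) - fstar) / Real.sqrt (((1 - α * L) / (2 * α)) * (N + 1)) := by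
  have hL0 : 0 < L := one_div_pos.mp (hα1.trans hα2)
  have hp : ∀ k, p k ∈ C := fun k => k.casesOn hp0 fun j => (hrec j).1
  exact gradient_projection_iteration_complexity_general hκ hC hconv (fun x _ => hf x) hLip hα1
    ((lt_div_iff₀ hL0).mp hα2) hp (fun k => hfstar _ (hp k)) fun k => (hrec k).2.1 _ (hp k)
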